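/- Let f be a multicritical circle map with irrational rotation number and return times q_n. There exists a constant C_2 > 1 depending only on f satisfying the following. Let z_1, z_2, z_3, z_4, z_5 be the points (with z_{j+1} = f^{q_n}(z_j) and comparable consecutive gaps) produced by the seven-point lemma. If w_0, w_1, w_2, w_3, w_4 are points on the circle with w_{j+1} = f^{q_n}(w_j) and such that w_1 lies in the interval with endpoints z_1 and z_2 that does not contain z_3, then |w_1 − w_2|/|w_0 − w_1| ≤ C_2, and C_2^{−1} ≤ |w_{i−1} − w_i|/|w_i − w_{i+1}| ≤ C_2 for i = 2, 3. -/

import Mathlib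

open Set Filter MeasureTheory

noncomputable section

/-- The Schwarzian derivative `Sf = (f''/f')' - (1/2) (f''/f')^2`. -/
def schwarzianDeriv (f : ℝ → ℝ) (x : ℝ) : ℝ :=
  deriv (fun y => deriv (deriv f) y / deriv f y) x
    - (1 / 2) * (deriv (deriv f) x / deriv f x) ^ 2

/-- A multicritical circle map, described through its lift `F : ℝ → ℝ` to the real line.
It is an orientation-preserving `C^3` circle homeomorphism with finitely many critical
points `c 0, …, c (N-1)`, each of non-flat power-law type: near `c i` the derivative is
pinched between two multiples of `|x - c i| ^ (s i - 1)` with `s i > 1`, the Schwarzian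
derivative is negative on a punctured neighborhood of each critical point, and
`log (F')` has bounded variation (bounded by `v`) off the critical neighborhoods. -/
structure MCM where
  /-- the lift of the circle map -/
  F : ℝ → ℝ
  smooth : ContDiff ℝ 3 F
  mono : StrictMono F
  deg1 : ∀ x, F (x + 1) = F x + 1
  /-- number of critical points -/
  N : ℕ
  N_pos : 0 < N
  /-- the critical points (one representative in `[0,1)` for each) -/
  c : Fin N → ℝ
  c_mem : ∀ i, c i ∈ Set.Ico (0 : ℝ) 1
  c_inj : Function.Injective c
  isCrit : ∀ i, deriv F (c i) = 0
  critOnly : ∀ x, deriv F x = 0 → ∃ (i : Fin N) (k : ℤ), x = c i + (k : ℝ)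
  /-- neighborhoods of the critical points -/
  W : Fin N → Set ℝ
  W_open : ∀ i, IsOpen (W i)
  c_mem_W : ∀ i, c i ∈ W i
  /-- the criticalities (power-law exponents) -/
  s : Fin N → ℝ
  s_gt_one : ∀ i, 1 < s i
  al : Fin N → ℝ
  be : Fin N → ℝ
  al_pos : ∀ i, 0 < al i
  al_lt_be : ∀ i, al i < be i
  powerLaw : ∀ i, ∀ x ∈ W i, x ≠ c i →
    al i * |x - c i| ^ (s i - 1) < deriv F x ∧
      deriv F x < be i * |x - c i| ^ (s i - 1)
  negSchwarzian : ∀ i, ∀ x ∈ W i, x ≠ c i → schwarzianDeriv F x < 0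
  /-- bound for the variation of `log DF` off the critical neighborhoods -/
  v : ℝ
  v_pos : 0 < v
  logDF_var : eVariationOn (fun x => Real.log (deriv F x))
      (Set.Icc 0 1 \ ⋃ (i) (k : ℤ), (fun y => y + (k : ℝ)) '' W i) ≤ ENNReal.ofReal v

/-- The circle map with lift `F` has rotation number `ρ`. -/
def HasRotationNumber (F : ℝ → ℝ) (ρ : ℝ) : Prop :=
  Tendsto (fun n : ℕ => F^[n] 0 / n) atTop (nhds ρ)

/-- The Gauss map `x ↦ {1/x}`. -/
def gaussMap (x : ℝ) : ℝ := Int.fract x⁻¹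

/-- Partial quotients `a_n` of the continued fraction expansion of `ρ ∈ (0,1)`. -/
def cfDigit (ρ : ℝ) (n : ℕ) : ℕ := (⌊(gaussMap^[n] ρ)⁻¹⌋).toNat

/-- Return times: the denominators `q_n` of the convergents of `ρ`,
`q_0 = 1`, `q_1 = a_0`, `q_{n+1} = a_n q_n + q_{n-1}`. -/
def qDen (ρ : ℝ) : ℕ → ℕ
  | 0 => 1
  | 1 => cfDigit ρ 0
  | n + 2 => cfDigit ρ (n + 1) * qDen ρ (n + 1) + qDen ρ n

/-- Numerators `p_n` of the convergents of `ρ`: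
`p_0 = 0`, `p_1 = 1`, `p_{n+1} = a_n p_n + p_{n-1}`. -/
def pNum (ρ : ℝ) : ℕ → ℕ
  | 0 => 0
  | 1 => 1
  | n + 2 => cfDigit ρ (n + 1) * pNum ρ (n + 1) + pNum ρ n

/-!
Let `R` be the return map `f^{q_n}`, lifted to the line. An interval with endpoints `x` and `R x`
has pairwise disjoint images under `1, f, …, f^{q_n - 1}`, because `q_n` is a closest return time.
Hence these images have bounded total length and contain each critical point at most once. Applying
`f` to a short interval free of critical points increases cross-ratios by at most a factor
`1 + O(length)` (near a critical point the negative Schwarzian derivative even decreases them), and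
the power law bounds the increase when a critical point is met. So `R` increases the cross-ratio of
four consecutive points of an orbit by at most a constant factor.

At the smallest gap this cross-ratio is at least `1 / 4`. Its lower bound is carried back along the
orbit, where it bounds each gap by a multiple of the next one. Hence the gaps of `z` are bounded
by the smallest gap, and so are those of `w`, whose points lie between consecutive points of `z`.
-/

section ContinuedFraction

variable {ρ : ℝ}

lemma irrational_iterate_gaussMap (hirr : Irrational ρ) (n : ℕ) : Irrational (gaussMap^[n] ρ) := by
  induction n with
  | zero => exact hirr
  | succ n ih =>
    rw [Function.iterate_succ_apply', gaussMap, ← Int.self_sub_floor]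
    exact ih.inv.sub_intCast _

lemma iterate_gaussMap_mem_Ioo (hirr : Irrational ρ) (hmem : ρ ∈ Ioo (0 : ℝ) 1) (n : ℕ) :
    gaussMap^[n] ρ ∈ Ioo (0 : ℝ) 1 := by
  cases n with
  | zero => exact hmem
  | succ n =>
    have hne := (irrational_iterate_gaussMap hirr (n + 1)).ne_zero
    rw [Function.iterate_succ_apply'] at hne ⊢
    exact ⟨(Int.fract_nonneg _).lt_of_ne' hne, Int.fract_lt_one _⟩

lemma cfDigit_pos (hirr : Irrational ρ) (hmem : ρ ∈ Ioo (0 : ℝ) 1) (n : ℕ) :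
    0 < cfDigit ρ n := by
  obtain ⟨hpos, hlt⟩ := iterate_gaussMap_mem_Ioo hirr hmem n
  have hfloor : 1 ≤ ⌊(gaussMap^[n] ρ)⁻¹⌋ :=
    Int.le_floor.2 (by simpa using (one_le_inv₀ hpos).2 hlt.le)
  rw [cfDigit]
  omega

lemma cfDigit_add_iterate_gaussMap {n : ℕ} (hnonneg : 0 ≤ gaussMap^[n] ρ) :
    cfDigit ρ n + gaussMap^[n + 1] ρ = (gaussMap^[n] ρ)⁻¹ := by
  have hfloor : ((cfDigit ρ n : ℤ) : ℝ) = ⌊(gaussMap^[n] ρ)⁻¹⌋ := by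
    rw [cfDigit, Int.toNat_of_nonneg (Int.floor_nonneg.2 (inv_nonneg.2 hnonneg))]
  rw [Function.iterate_succ_apply', gaussMap, ← Int.cast_natCast, hfloor, Int.floor_add_fract]

lemma qDen_pos (hirr : Irrational ρ) (hmem : ρ ∈ Ioo (0 : ℝ) 1) : ∀ n, 0 < qDen ρ n
  | 0 => one_pos
  | 1 => cfDigit_pos hirr hmem 0
  | n + 2 => Nat.add_pos_right _ (qDen_pos hirr hmem n)

lemma qDen_mul_pNum_sub_sq (ρ : ℝ) (n : ℕ) :
    ((qDen ρ n : ℤ) * pNum ρ (n + 1) - qDen ρ (n + 1) * pNum ρ n) ^ 2 = 1 := by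
  induction n with
  | zero => simp [qDen, pNum]
  | succ n ih =>
    rw [← ih]
    simp only [qDen, pNum]
    push_cast
    ring

lemma exists_eq_combination_qDen_pNum (ρ : ℝ) (n : ℕ) (l k : ℤ) :
    ∃ a b : ℤ, l = a * qDen ρ (n + 1) + b * qDen ρ n ∧ k = a * pNum ρ (n + 1) + b * pNum ρ n := by
  set D : ℤ := (qDen ρ n : ℤ) * pNum ρ (n + 1) - qDen ρ (n + 1) * pNum ρ n with hD
  have hDsq : D ^ 2 = 1 := qDen_mul_pNum_sub_sq ρ n
  refine ⟨D * (k * qDen ρ n - l * pNum ρ n), D * (l * pNum ρ (n + 1) - k * qDen ρ (n + 1)), ?_, ?_⟩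
  · linear_combination (-l) * hDsq + l * D * hD
  · linear_combination (-k) * hDsq + k * D * hD

/-- The signed error `q_n ρ - p_n` of the `n`-th convergent. -/
def convError (ρ : ℝ) (n : ℕ) : ℝ := qDen ρ n * ρ - pNum ρ n

lemma convError_ne_zero (hirr : Irrational ρ) (hmem : ρ ∈ Ioo (0 : ℝ) 1) (n : ℕ) :
    convError ρ n ≠ 0 :=
  sub_ne_zero.2 ((hirr.natCast_mul (qDen_pos hirr hmem n).ne').ne_nat _)

lemma convError_succ (hirr : Irrational ρ) (hmem : ρ ∈ Ioo (0 : ℝ) 1) (n : ℕ) :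
    convError ρ (n + 1) = -gaussMap^[n + 1] ρ * convError ρ n := by
  have hdigit (m : ℕ) :
      (cfDigit ρ m + gaussMap^[m + 1] ρ) * gaussMap^[m] ρ = 1 := by
    have hpos := (iterate_gaussMap_mem_Ioo hirr hmem m).1
    rw [cfDigit_add_iterate_gaussMap hpos.le, inv_mul_cancel₀ hpos.ne']
  induction n with
  | zero =>
    have h := hdigit 0
    simp only [convError, qDen, pNum, Function.iterate_zero, id] at h ⊢
    push_cast
    linear_combination h
  | succ n ih =>
    have hrec : convError ρ (n + 2) = cfDigit ρ (n + 1) * convError ρ (n + 1) + convError ρ n := by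
      simp only [convError, qDen, pNum]
      push_cast
      ring
    rw [hrec]
    linear_combination
      (cfDigit ρ (n + 1) + gaussMap^[n + 2] ρ) * ih - convError ρ n * hdigit (n + 1)

lemma eq_zero_of_abs_sub_mul_le {x : ℝ} (hx : x ∈ Ioo (0 : ℝ) 1) {a b : ℤ} {m m' : ℕ}
    (hlt : |a * m' + b * m| < m') (hle : |b - a * x| ≤ x) : a = 0 ∧ b = 0 := by
  obtain ⟨hx0, hx1⟩ := hx
  rw [abs_lt] at hlt
  rw [abs_le] at hle
  rcases lt_trichotomy a 0 with ha | rfl | ha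
  · have hb : 0 < b := by
      by_contra! hb
      nlinarith [mul_nonneg (neg_nonneg.2 hb) (Int.natCast_nonneg m)]
    have ha' : (a : ℝ) < 0 := mod_cast ha
    have hb' : (1 : ℝ) ≤ b := mod_cast hb
    nlinarith
  · refine ⟨rfl, Int.abs_lt_one_iff.1 ?_⟩
    have : |(b : ℝ)| < 1 := by
      rw [abs_lt]
      constructor <;> push_cast at hle <;> linarith [hle.1, hle.2]
    exact_mod_cast this
  · have hb : b < 0 := by
      by_contra! hb
      nlinarith [mul_nonneg hb (Int.natCast_nonneg m)]
    have ha' : (0 : ℝ) < a := mod_cast ha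
    have hb' : (b : ℝ) ≤ -1 := mod_cast Int.le_sub_one_of_lt hb
    nlinarith

/-- `(q, p)` is a closest return for the rotation by `τ`: among all displacements `l τ - k` with
`|l| < q`, only the trivial one is as close to `0` as `q τ - p`, which itself does not vanish. -/
structure IsClosestReturn (τ : ℝ) (q : ℕ) (p : ℤ) : Prop where
  ne_zero : q * τ - p ≠ 0
  eq_zero_of_abs_le : ∀ l k : ℤ, |l| < q → |l * τ - k| ≤ |q * τ - p| → l = 0 ∧ k = 0

theorem isClosestReturn_qDen_pNum (hirr : Irrational ρ) (hmem : ρ ∈ Ioo (0 : ℝ) 1) (n : ℕ) :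
    IsClosestReturn ρ (qDen ρ n) (pNum ρ n) := by
  refine ⟨by simpa [convError] using convError_ne_zero hirr hmem n, fun l k hl hle => ?_⟩
  rw [Int.cast_natCast] at hle
  change |l * ρ - k| ≤ |convError ρ n| at hle
  cases n with
  | zero =>
    obtain rfl : l = 0 := Int.abs_lt_one_iff.1 (by simpa [qDen] using hl)
    have hk : |(k : ℝ)| < 1 := by
      simp only [convError, qDen, pNum, abs_of_pos hmem.1, Int.cast_zero, zero_mul, zero_sub,
        abs_neg, Nat.cast_one, one_mul, Nat.cast_zero, sub_zero] at hle
      exact hle.trans_lt hmem.2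
    exact ⟨rfl, Int.abs_lt_one_iff.1 (mod_cast hk)⟩
  | succ n =>
    obtain ⟨a, b, rfl, rfl⟩ := exists_eq_combination_qDen_pNum ρ n l k
    have hx := iterate_gaussMap_mem_Ioo hirr hmem (n + 1)
    have hcomb : ((a * qDen ρ (n + 1) + b * qDen ρ n : ℤ) : ℝ) * ρ -
        (a * pNum ρ (n + 1) + b * pNum ρ n : ℤ) = (b - a * gaussMap^[n + 1] ρ) * convError ρ n := by
      have hsucc := convError_succ hirr hmem n
      simp only [convError] at hsucc ⊢
      push_cast
      linear_combination (a : ℝ) * hsucc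
    rw [hcomb, convError_succ hirr hmem, abs_mul, abs_mul, abs_neg, abs_of_pos hx.1] at hle
    have hpos := abs_pos.2 (convError_ne_zero hirr hmem n)
    obtain ⟨rfl, rfl⟩ := eq_zero_of_abs_sub_mul_le hx hl (le_of_mul_le_mul_right hle hpos)
    simp

end ContinuedFraction

section ClosestReturn

/-- The `q`-th iterate of the lift `F`, moved back by `p` turns. -/
def returnMap (F : ℝ → ℝ) (q : ℕ) (p : ℤ) (x : ℝ) : ℝ := F^[q] x - p

/-- `[x, y]` is an interval between a point and its image under the return map, which may move
points in either direction. -/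
def IsReturnInterval (F : ℝ → ℝ) (q : ℕ) (p : ℤ) (x y : ℝ) : Prop :=
  x < y ∧ (y = returnMap F q p x ∨ x = returnMap F q p y)

variable (g : CircleDeg1Lift) {q : ℕ} {p : ℤ} {x y : ℝ}

lemma iterate_circleDeg1Lift_add_int (m : ℕ) (x : ℝ) (k : ℤ) : g^[m] (x + k) = g^[m] x + k :=
  (g.commute_add_int k).iterate_left m x

lemma iterate_returnMap (m q : ℕ) (p : ℤ) (x : ℝ) :
    g^[m] (returnMap g q p x) = g^[m + q] x + (-p : ℤ) := by
  rw [Function.iterate_add_apply, ← iterate_circleDeg1Lift_add_int, returnMap, Int.cast_neg,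
    sub_eq_add_neg]

lemma translationNumber_le_of_iterate_le {a b : ℕ} {k l : ℤ} (h : g^[a] x + k ≤ g^[b] x + l) :
    a * g.translationNumber + k ≤ b * g.translationNumber + l := by
  rcases le_total a b with hab | hab
  · obtain ⟨m, rfl⟩ := Nat.exists_eq_add_of_le' hab
    rw [Function.iterate_add_apply, ← g.coe_pow m] at h
    have := (g ^ m).le_translationNumber_of_add_int_le (x := g^[a] x) (m := k - l)
      (by push_cast; linarith)
    rw [CircleDeg1Lift.translationNumber_pow] at this
    push_cast at this ⊢
    linarith
  · obtain ⟨m, rfl⟩ := Nat.exists_eq_add_of_le' hab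
    rw [Function.iterate_add_apply, ← g.coe_pow m] at h
    have := (g ^ m).translationNumber_le_of_le_add_int (x := g^[b] x) (m := l - k)
      (by push_cast; linarith)
    rw [CircleDeg1Lift.translationNumber_pow] at this
    push_cast at this ⊢
    linarith

lemma lt_returnMap_or_returnMap_lt (hne : q * g.translationNumber - p ≠ 0) :
    (∀ x, x < returnMap g q p x) ∨ ∀ x, returnMap g q p x < x := by
  rcases hne.lt_or_gt with hneg | hpos
  · refine Or.inr fun x => lt_of_not_ge fun hge => ?_
    have := translationNumber_le_of_iterate_le g (a := 0) (b := q) (k := p) (l := 0) (x := x)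
      (by simpa [returnMap, le_sub_iff_add_le] using hge)
    push_cast at this
    linarith
  · refine Or.inl fun x => lt_of_not_ge fun hle => ?_
    have := translationNumber_le_of_iterate_le g (a := q) (b := 0) (k := 0) (l := p) (x := x)
      (by simpa [returnMap] using hle)
    push_cast at this
    linarith

lemma abs_sub_mul_translationNumber_le (h : IsReturnInterval g q p x y) {i j : ℕ} {k : ℤ}
    (hij : g^[i] x ≤ g^[j] y + k) (hji : g^[j] x + k ≤ g^[i] y) :
    |((i : ℝ) - j) * g.translationNumber - k| ≤ |q * g.translationNumber - p| := by
  rcases h.2 with rfl | rfl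
  · rw [iterate_returnMap] at hij hji
    have hi := translationNumber_le_of_iterate_le g (a := i) (b := j + q) (k := 0) (l := -p + k)
      (x := x) (by push_cast at *; linarith)
    have hj := translationNumber_le_of_iterate_le g hji
    push_cast at hi hj
    exact le_trans (abs_le.2 ⟨by linarith, by linarith⟩) (le_abs_self _)
  · rw [iterate_returnMap] at hij hji
    have hi := translationNumber_le_of_iterate_le g hij
    have hj := translationNumber_le_of_iterate_le g (a := j + q) (b := i) (k := -p + k) (l := 0)
      (x := y) (by push_cast at *; linarith)
    push_cast at hi hj
    exact le_trans (abs_le.2 ⟨by linarith, by linarith⟩) (neg_le_abs _)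

lemma sum_sub_le_two_of_disjoint_mod_one {ι : Type*} {s : Finset ι} {a b : ι → ℝ}
    (hab : ∀ i ∈ s, a i ≤ b i) (hlen : ∀ i ∈ s, b i ≤ a i + 1)
    (hdisj : ∀ i ∈ s, ∀ j ∈ s, ∀ k : ℤ, a i < b j + k → a j + k < b i → i = j) :
    ∑ i ∈ s, (b i - a i) ≤ 2 := by
  have hpair : (s : Set ι).PairwiseDisjoint fun i => Ico (a i - ⌊a i⌋) (b i - ⌊a i⌋) := by
    refine fun i hi j hj hne => disjoint_left.2 fun t hti htj => hne ?_
    refine hdisj i hi j hj (⌊a i⌋ - ⌊a j⌋) ?_ ?_ <;> push_cast <;>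
      linarith [hti.1, hti.2, htj.1, htj.2]
  have hsub : (⋃ i ∈ s, Ico (a i - ⌊a i⌋) (b i - ⌊a i⌋)) ⊆ Ico (0 : ℝ) 2 := by
    refine iUnion₂_subset fun i hi => Ico_subset_Ico ?_ ?_
    · linarith [Int.floor_le (a i)]
    · linarith [Int.lt_floor_add_one (a i), hlen i hi]
  have hvol := measure_mono (μ := volume) hsub
  simp only [measure_biUnion_finset hpair fun _ _ => measurableSet_Ico, Real.volume_Ico,
    sub_sub_sub_cancel_right, sub_zero] at hvol
  rw [← ENNReal.ofReal_sum_of_nonneg fun i hi => sub_nonneg.2 (hab i hi)] at hvol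
  exact (ENNReal.ofReal_le_ofReal_iff zero_le_two).1 hvol

variable {g} (hq : IsClosestReturn g.translationNumber q p) (h : IsReturnInterval g q p x y)
include hq h

lemma eq_of_iterate_returnInterval_inter {i j : ℕ} (hi : i < q) (hj : j < q) {k : ℤ}
    (hij : g^[i] x ≤ g^[j] y + k) (hji : g^[j] x + k ≤ g^[i] y) : i = j ∧ k = 0 := by
  have hle := abs_sub_mul_translationNumber_le g h hij hji
  obtain ⟨hsub, hk⟩ := hq.eq_zero_of_abs_le (i - j) k (by rw [abs_lt]; omega) (by simpa using hle)
  exact ⟨by omega, hk⟩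

lemma iterate_returnInterval_lt_add_one {i : ℕ} (hi : i < q) : g^[i] y < g^[i] x + 1 := by
  by_contra! hge
  have hmono := g.monotone.iterate i h.1.le
  have hk := (eq_of_iterate_returnInterval_inter hq h hi hi (k := 1)
    (by push_cast; linarith [hmono]) (by push_cast; linarith [hge])).2
  exact one_ne_zero hk

lemma sum_length_iterate_returnInterval_le :
    ∑ i ∈ Finset.range q, (g^[i] y - g^[i] x) ≤ 2 := by
  refine sum_sub_le_two_of_disjoint_mod_one (fun i _ => g.monotone.iterate i h.1.le)
    (fun i hi => (iterate_returnInterval_lt_add_one hq h (Finset.mem_range.1 hi)).le)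
    fun i hi j hj k hij hji => ?_
  exact (eq_of_iterate_returnInterval_inter hq h (Finset.mem_range.1 hi) (Finset.mem_range.1 hj)
    hij.le hji.le).1

end ClosestReturn

section CrossRatio

/-- The cross-ratio `|b - a| |d - c| / (|c - a| |d - b|)`. The absolute values make it invariant
under reversing the order of the four points. -/
def crossRatio (a b c d : ℝ) : ℝ := |b - a| / |c - a| * (|d - c| / |d - b|)

lemma crossRatio_nonneg (a b c d : ℝ) : 0 ≤ crossRatio a b c d := by
  unfold crossRatio
  positivity

lemma crossRatio_sub_right (a b c d t : ℝ) :
    crossRatio (a - t) (b - t) (c - t) (d - t) = crossRatio a b c d := by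
  simp only [crossRatio, sub_sub_sub_cancel_right]

lemma crossRatio_reverse (a b c d : ℝ) : crossRatio d c b a = crossRatio a b c d := by
  simp only [crossRatio, abs_sub_comm, mul_comm]

variable {F : ℝ → ℝ} {a b c d : ℝ}

lemma crossRatio_map_le (hF : StrictMonoOn F (Icc a d)) (hab : a < b) (hbc : b < c) (hcd : c < d)
    {E₁ E₂ : ℝ} (h₁ : slope F a b ≤ E₁ * slope F a c) (h₂ : slope F c d ≤ E₂ * slope F b d) :
    crossRatio (F a) (F b) (F c) (F d) ≤ E₁ * E₂ * crossRatio a b c d := by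
  have hac := hab.trans hbc
  have hbd := hbc.trans hcd
  have had := hab.trans hbd
  have hFab : 0 < F b - F a := sub_pos.2 (hF ⟨le_rfl, had.le⟩ ⟨hab.le, hbd.le⟩ hab)
  have hFac : 0 < F c - F a := sub_pos.2 (hF ⟨le_rfl, had.le⟩ ⟨hac.le, hcd.le⟩ hac)
  have hFbd : 0 < F d - F b := sub_pos.2 (hF ⟨hab.le, hbd.le⟩ ⟨had.le, le_rfl⟩ hbd)
  have hFcd : 0 < F d - F c := sub_pos.2 (hF ⟨hac.le, hcd.le⟩ ⟨had.le, le_rfl⟩ hcd)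
  rw [← sub_pos] at hab hac hbd hcd
  have hleft : (F b - F a) / (F c - F a) ≤ E₁ * ((b - a) / (c - a)) := by
    rw [slope_def_field, slope_def_field, div_le_iff₀ hab] at h₁
    rw [div_le_iff₀ hFac]
    exact h₁.trans_eq (by ring)
  have hright : (F d - F c) / (F d - F b) ≤ E₂ * ((d - c) / (d - b)) := by
    rw [slope_def_field, slope_def_field, div_le_iff₀ hcd] at h₂
    rw [div_le_iff₀ hFbd]
    exact h₂.trans_eq (by ring)
  simp only [crossRatio, abs_of_pos, hab, hac, hbd, hcd, hFab, hFac, hFbd, hFcd]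
  refine (mul_le_mul hleft hright (by positivity) (le_trans (by positivity) hleft)).trans_eq ?_
  ring

lemma crossRatio_map_le_of_deriv_le_mul_slope (hF : StrictMonoOn F (Icc a d))
    (hdiff : Differentiable ℝ F) (hab : a < b) (hbc : b < c) (hcd : c < d) {E : ℝ}
    (h : ∀ u ∈ Icc a d, ∀ v ∈ Icc a d, u < v → ∀ x ∈ Icc u v, deriv F x ≤ E * slope F u v) :
    crossRatio (F a) (F b) (F c) (F d) ≤ E ^ 2 * crossRatio a b c d := by
  have hslope {u v : ℝ} (huv : u < v) : ∃ x ∈ Ioo u v, deriv F x = slope F u v :=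
    exists_deriv_eq_slope' F huv hdiff.continuous.continuousOn hdiff.differentiableOn
  obtain ⟨x, hx, hxab⟩ := hslope hab
  obtain ⟨y, hy, hycd⟩ := hslope hcd
  rw [sq]
  refine crossRatio_map_le hF hab hbc hcd ?_ ?_
  · rw [← hxab]
    exact h a ⟨le_rfl, by linarith⟩ c ⟨by linarith, hcd.le⟩ (hab.trans hbc) x
      ⟨hx.1.le, (hx.2.trans hbc).le⟩
  · rw [← hycd]
    exact h b ⟨hab.le, by linarith⟩ d ⟨by linarith, le_rfl⟩ (hbc.trans hcd) y
      ⟨(hbc.trans hy.1).le, hy.2.le⟩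

end CrossRatio

section NegativeSchwarzian

variable {F : ℝ → ℝ} {a b c d t x : ℝ}

lemma schwarzianDeriv_eq (hF : ContDiff ℝ 3 F) (hx : deriv F x ≠ 0) :
    schwarzianDeriv F x = deriv (deriv (deriv F)) x / deriv F x -
      3 / 2 * (deriv (deriv F) x / deriv F x) ^ 2 := by
  have hF' : HasDerivAt (deriv F) _ x := (hF.deriv'.differentiable two_ne_zero x).hasDerivAt
  have hF'' : HasDerivAt (deriv (deriv F)) _ x :=
    (hF.deriv'.deriv'.differentiable one_ne_zero x).hasDerivAt
  rw [schwarzianDeriv, (hF''.fun_div hF' hx).deriv]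
  field_simp
  ring

/-- The function `(F - t) / √F'`. For each `t` it solves the linear equation `u'' = -(SF / 2) u`,
where `SF` is the Schwarzian derivative; this turns the sign of `SF` into convexity. -/
def schwarzSolution (F : ℝ → ℝ) (t x : ℝ) : ℝ := (F x - t) / √(deriv F x)

lemma hasDerivAt_schwarzSolution (hF : ContDiff ℝ 3 F) (t : ℝ) (hx : 0 < deriv F x) :
    HasDerivAt (schwarzSolution F t)
      (√(deriv F x) - (F x - t) * deriv (deriv F) x / (2 * (deriv F x * √(deriv F x)))) x := by
  have hF₀ := (hF.differentiable three_ne_zero x).hasDerivAt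
  have hF' := (hF.deriv'.differentiable two_ne_zero x).hasDerivAt
  have hsqrt := Real.sqrt_pos.2 hx
  refine ((hF₀.sub_const t).fun_div (hF'.sqrt hx.ne') hsqrt.ne').congr_deriv ?_
  have hsq := Real.sq_sqrt hx.le
  generalize √(deriv F x) = g at *
  rw [← hsq]
  field_simp

lemma hasDerivAt_deriv_schwarzSolution (hF : ContDiff ℝ 3 F) (t : ℝ) (hx : 0 < deriv F x) :
    HasDerivAt
      (fun y => √(deriv F y) - (F y - t) * deriv (deriv F) y / (2 * (deriv F y * √(deriv F y))))
      (-(schwarzianDeriv F x / 2) * schwarzSolution F t x) x := by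
  have hF₀ := (hF.differentiable three_ne_zero x).hasDerivAt
  have hF' := (hF.deriv'.differentiable two_ne_zero x).hasDerivAt
  have hF'' := (hF.deriv'.deriv'.differentiable one_ne_zero x).hasDerivAt
  have hsqrt := Real.sqrt_pos.2 hx
  have hF's := hF'.sqrt hx.ne'
  refine (hF's.fun_sub (((hF₀.sub_const t).fun_mul hF'').fun_div ((hF'.fun_mul hF's).const_mul 2)
    (by positivity))).congr_deriv ?_
  rw [schwarzianDeriv_eq hF hx.ne', schwarzSolution]
  have hsq := Real.sq_sqrt hx.le
  generalize √(deriv F x) = g at *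
  rw [← hsq]
  field_simp
  ring

variable (hF : ContDiff ℝ 3 F) (hpos : ∀ x ∈ Icc a d, 0 < deriv F x)
  (hS : ∀ x ∈ Icc a d, schwarzianDeriv F x ≤ 0)
include hF hpos hS

lemma convexOn_schwarzSolution (ht : ∀ x ∈ Icc a d, t ≤ F x) :
    ConvexOn ℝ (Icc a d) (schwarzSolution F t) := by
  have hsub : interior (Icc a d) ⊆ Icc a d := interior_subset
  refine convexOn_of_hasDerivWithinAt2_nonneg (convex_Icc a d)
    (fun x hx => (hasDerivAt_schwarzSolution hF t (hpos x hx)).continuousAt.continuousWithinAt)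
    (fun x hx => (hasDerivAt_schwarzSolution hF t (hpos x (hsub hx))).hasDerivWithinAt)
    (fun x hx => (hasDerivAt_deriv_schwarzSolution hF t (hpos x (hsub hx))).hasDerivWithinAt)
    fun x hx => mul_nonneg ?_ (div_nonneg (sub_nonneg.2 (ht x (hsub hx))) (Real.sqrt_nonneg _))
  linarith [hS x (hsub hx)]

lemma concaveOn_schwarzSolution (ht : ∀ x ∈ Icc a d, F x ≤ t) :
    ConcaveOn ℝ (Icc a d) (schwarzSolution F t) := by
  have hsub : interior (Icc a d) ⊆ Icc a d := interior_subset
  refine concaveOn_of_hasDerivWithinAt2_nonpos (convex_Icc a d)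
    (fun x hx => (hasDerivAt_schwarzSolution hF t (hpos x hx)).continuousAt.continuousWithinAt)
    (fun x hx => (hasDerivAt_schwarzSolution hF t (hpos x (hsub hx))).hasDerivWithinAt)
    (fun x hx => (hasDerivAt_deriv_schwarzSolution hF t (hpos x (hsub hx))).hasDerivWithinAt)
    fun x hx => mul_nonpos_of_nonneg_of_nonpos ?_
      (div_nonpos_of_nonpos_of_nonneg (sub_nonpos.2 (ht x (hsub hx))) (Real.sqrt_nonneg _))
  linarith [hS x (hsub hx)]

theorem crossRatio_map_le_of_schwarzianDeriv_nonpos (hab : a < b) (hbc : b < c) (hcd : c < d) :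
    crossRatio (F a) (F b) (F c) (F d) ≤ crossRatio a b c d := by
  have ha : a ∈ Icc a d := ⟨le_rfl, by linarith⟩
  have hb : b ∈ Icc a d := ⟨hab.le, by linarith⟩
  have hc : c ∈ Icc a d := ⟨by linarith, hcd.le⟩
  have hd : d ∈ Icc a d := ⟨by linarith, le_rfl⟩
  have hmono : StrictMonoOn F (Icc a d) :=
    strictMonoOn_of_deriv_pos (convex_Icc a d) hF.continuous.continuousOn
      fun x hx => hpos x (interior_subset hx)
  have hsb := Real.sqrt_pos.2 (hpos b hb)
  have hsc := Real.sqrt_pos.2 (hpos c hc)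
  have hleft := (convexOn_schwarzSolution hF hpos hS
    fun x hx => hmono.monotoneOn ha hx hx.1).secant_mono ha hb hc hab.ne' (hab.trans hbc).ne' hbc.le
  have hright := (concaveOn_schwarzSolution hF hpos hS
    fun x hx => hmono.monotoneOn hx hd hx.2).neg.secant_mono hd hb hc (hbc.trans hcd).ne hcd.ne
      hbc.le
  have hE : √(deriv F b) / √(deriv F c) * (√(deriv F c) / √(deriv F b)) = 1 := by
    field_simp
  rw [← one_mul (crossRatio a b c d), ← hE]
  refine crossRatio_map_le hmono hab hbc hcd ?_ ?_
  · simp only [schwarzSolution, sub_self, zero_div, sub_zero] at hleft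
    rw [slope_def_field, slope_def_field, div_mul_eq_mul_div, le_div_iff₀ hsc]
    rw [div_right_comm, div_right_comm (F c - F a), div_le_div_iff₀ hsb hsc] at hleft
    linarith
  · simp only [Pi.neg_apply, schwarzSolution, sub_self, zero_div, neg_zero, sub_zero, ← neg_div,
      neg_sub] at hright
    rw [slope_comm F c d, slope_comm F b d, slope_def_field, slope_def_field, div_mul_eq_mul_div,
      le_div_iff₀ hsb]
    rw [div_right_comm, div_right_comm (F d - F c), div_le_div_iff₀ hsb hsc,
      ← neg_sub (F b), ← neg_sub (F c), neg_div, neg_div] at hright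
    linarith

end NegativeSchwarzian

section Distortion

variable {F : ℝ → ℝ} {a b x : ℝ}

lemma deriv_le_mul_slope (hdiff : Differentiable ℝ F) (hab : a < b) {E : ℝ}
    (h : ∀ y ∈ Icc a b, deriv F x ≤ E * deriv F y) : deriv F x ≤ E * slope F a b := by
  obtain ⟨y, hy, hslope⟩ :=
    exists_deriv_eq_slope' F hab hdiff.continuous.continuousOn hdiff.differentiableOn
  rw [← hslope]
  exact h y (Ioo_subset_Icc_self hy)

lemma deriv_le_exp_mul_deriv {L η : ℝ} (hF : Differentiable ℝ (deriv F)) (hη : 0 < η)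
    (hL : ∀ x ∈ Icc a b, |deriv (deriv F) x| ≤ L) (hpos : ∀ x ∈ Icc a b, η ≤ deriv F x)
    (hx : x ∈ Icc a b) {y : ℝ} (hy : y ∈ Icc a b) :
    deriv F x ≤ Real.exp (L / η * (b - a)) * deriv F y := by
  have hL₀ : 0 ≤ L := (abs_nonneg _).trans (hL x hx)
  have hab : 0 ≤ b - a := sub_nonneg.2 (hx.1.trans hx.2)
  have hηy := hpos y hy
  have hlip : |deriv F x - deriv F y| ≤ L * |x - y| :=
    (convex_Icc a b).norm_image_sub_le_of_norm_deriv_le (fun z _ => hF z) hL hy hx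
  have hxy : |x - y| ≤ b - a := abs_le.2 ⟨by linarith [hx.1, hy.2], by linarith [hx.2, hy.1]⟩
  calc deriv F x ≤ deriv F y + L * |x - y| := by linarith [le_abs_self (deriv F x - deriv F y)]
    _ ≤ deriv F y + L * (b - a) * (deriv F y / η) := by
      refine add_le_add_right ((mul_le_mul_of_nonneg_left hxy hL₀).trans ?_) _
      exact le_mul_of_one_le_right (by positivity) ((one_le_div hη).2 hηy)
    _ = (L / η * (b - a) + 1) * deriv F y := by ring
    _ ≤ Real.exp (L / η * (b - a)) * deriv F y := by
      gcongr
      exacts [hη.le.trans hηy, Real.add_one_le_exp _]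

lemma exists_deriv_mul_le_sub_and_abs_sub_le (hdiff : Differentiable ℝ F) (hmono : Monotone F)
    (hab : a < b) (c : ℝ) :
    ∃ ξ ∈ Icc a b, deriv F ξ * ((b - a) / 4) ≤ F b - F a ∧ ξ ≠ c ∧
      ∀ x ∈ Icc a b, |x - c| ≤ 2 * |ξ - c| := by
  have hmean {u v : ℝ} (huv : u < v) : ∃ ξ ∈ Ioo u v, deriv F ξ * (v - u) = F v - F u := by
    obtain ⟨ξ, hξ, hslope⟩ :=
      exists_deriv_eq_slope F huv hdiff.continuous.continuousOn hdiff.differentiableOn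
    exact ⟨ξ, hξ, by rw [hslope, div_mul_cancel₀ _ (sub_pos.2 huv).ne']⟩
  -- `ξ` is a mean value point of the quarter of `[a, b]` at the end farther from `c`.
  rcases le_total (c - a) (b - c) with hfar | hfar
  · obtain ⟨ξ, hξ, hval⟩ := hmean (show b - (b - a) / 4 < b by linarith)
    have hdist : (b - c) / 2 ≤ ξ - c := by linarith [hξ.1]
    refine ⟨ξ, ⟨by linarith [hξ.1], hξ.2.le⟩, ?_, fun h => by linarith, fun x hx => ?_⟩
    · have := hmono (show a ≤ b - (b - a) / 4 by linarith)
      rw [sub_sub_cancel] at hval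
      linarith
    · have := le_abs_self (ξ - c)
      exact abs_le.2 ⟨by linarith [hx.1], by linarith [hx.2]⟩
  · obtain ⟨ξ, hξ, hval⟩ := hmean (show a < a + (b - a) / 4 by linarith)
    have hdist : (c - a) / 2 ≤ c - ξ := by linarith [hξ.2]
    refine ⟨ξ, ⟨hξ.1.le, by linarith [hξ.2]⟩, ?_, fun h => by linarith, fun x hx => ?_⟩
    · have := hmono (show a + (b - a) / 4 ≤ b by linarith)
      rw [add_sub_cancel_left] at hval
      linarith
    · have := neg_le_abs (ξ - c)
      exact abs_le.2 ⟨by linarith [hx.1], by linarith [hx.2]⟩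

lemma deriv_le_mul_slope_of_powerLaw (hdiff : Differentiable ℝ F) (hmono : Monotone F)
    {c α β s : ℝ} (hα : 0 < α) (hβ : 0 ≤ β) (hs : 1 ≤ s) (hc : deriv F c = 0) (hab : a < b)
    (hlow : ∀ y ∈ Icc a b, y ≠ c → α * |y - c| ^ (s - 1) ≤ deriv F y)
    (hupp : ∀ y ∈ Icc a b, y ≠ c → deriv F y ≤ β * |y - c| ^ (s - 1)) (hx : x ∈ Icc a b) :
    deriv F x ≤ 4 * (β / α) * 2 ^ (s - 1) * slope F a b := by
  obtain ⟨ξ, hξ, hval, hξc, hfar⟩ := exists_deriv_mul_le_sub_and_abs_sub_le hdiff hmono hab c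
  have hxupp : deriv F x ≤ β * |x - c| ^ (s - 1) := by
    rcases eq_or_ne x c with rfl | hxc
    · rw [hc]
      positivity
    · exact hupp x hx hxc
  have hslope : deriv F ξ ≤ 4 * slope F a b := by
    rw [slope_def_field, mul_div_assoc', le_div_iff₀ (sub_pos.2 hab)]
    linarith
  calc deriv F x ≤ β * |x - c| ^ (s - 1) := hxupp
    _ ≤ β * (2 * |ξ - c|) ^ (s - 1) := by
      gcongr
      exact hfar x hx
    _ = β / α * 2 ^ (s - 1) * (α * |ξ - c| ^ (s - 1)) := by
      rw [Real.mul_rpow zero_le_two (abs_nonneg _)]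
      field_simp
    _ ≤ β / α * 2 ^ (s - 1) * (4 * slope F a b) := by
      exact mul_le_mul_of_nonneg_left ((hlow ξ hξ hξc).trans hslope) (by positivity)
    _ = 4 * (β / α) * 2 ^ (s - 1) * slope F a b := by ring

lemma crossRatio_map_le_of_le_deriv {c d L η : ℝ} (hmono : StrictMonoOn F (Icc a d))
    (hdiff : Differentiable ℝ F) (hdiff' : Differentiable ℝ (deriv F)) (hη : 0 < η)
    (hL : ∀ x ∈ Icc a d, |deriv (deriv F) x| ≤ L) (hpos : ∀ x ∈ Icc a d, η ≤ deriv F x)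
    (hab : a < b) (hbc : b < c) (hcd : c < d) :
    crossRatio (F a) (F b) (F c) (F d) ≤
      Real.exp (2 * (L / η) * (d - a)) * crossRatio a b c d := by
  rw [mul_assoc, ← Nat.cast_two, Real.exp_nat_mul]
  refine crossRatio_map_le_of_deriv_le_mul_slope hmono hdiff hab hbc hcd
    fun u hu v hv huv x hx => deriv_le_mul_slope hdiff huv fun y hy => ?_
  exact deriv_le_exp_mul_deriv hdiff' hη hL hpos (Icc_subset_Icc hu.1 hv.2 hx)
    (Icc_subset_Icc hu.1 hv.2 hy)

end Distortion

section Displacement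

lemma quarter_le_crossRatio {a b c d : ℝ} (hac : a ≠ c) (hbd : b ≠ d) (hleft : |c - b| ≤ |b - a|)
    (hright : |c - b| ≤ |d - c|) : 1 / 4 ≤ crossRatio a b c d := by
  have hca : 1 / 2 ≤ |b - a| / |c - a| := by
    rw [le_div_iff₀ (abs_pos.2 (sub_ne_zero.2 hac.symm))]
    linarith [abs_sub_le c b a]
  have hdb : 1 / 2 ≤ |d - c| / |d - b| := by
    rw [le_div_iff₀ (abs_pos.2 (sub_ne_zero.2 hbd.symm))]
    linarith [abs_sub_le d c b]
  calc (1 / 4 : ℝ) = 1 / 2 * (1 / 2) := by norm_num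
    _ ≤ crossRatio a b c d := by
      unfold crossRatio
      gcongr

lemma crossRatio_mul_abs_sub_le {a b c d : ℝ} (hb : b ∈ uIcc a c) (hc : c ∈ uIcc b d) :
    crossRatio a b c d * |c - b| ≤ |d - c| := by
  have hba : |b - a| / |c - a| ≤ 1 :=
    div_le_one_of_le₀ (abs_sub_left_of_mem_uIcc hb) (abs_nonneg _)
  have hcb : |c - b| / |d - b| ≤ 1 :=
    div_le_one_of_le₀ (abs_sub_left_of_mem_uIcc hc) (abs_nonneg _)
  calc crossRatio a b c d * |c - b|
      = |b - a| / |c - a| * (|c - b| / |d - b|) * |d - c| := by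
        unfold crossRatio
        ring
    _ ≤ 1 * |d - c| := by
      gcongr
      exact mul_le_one₀ hba (by positivity) hcb
    _ = |d - c| := one_mul _

/-- The distance by which `R` moves `x`; along an orbit of the return map these are the gaps between
consecutive points. -/
def displacement (R : ℝ → ℝ) (x : ℝ) : ℝ := |R x - x|

/-- The cross-ratio of four consecutive points of the orbit of `x` under `R`. -/
def orbitCrossRatio (R : ℝ → ℝ) (x : ℝ) : ℝ := crossRatio x (R x) (R (R x)) (R (R (R x)))

variable {R : ℝ → ℝ} {B : ℝ} {x y : ℝ} {k n : ℕ}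

lemma orbitCrossRatio_iterate_le (hB₀ : 0 ≤ B)
    (hB : ∀ x, orbitCrossRatio R (R x) ≤ B * orbitCrossRatio R x) (k : ℕ) (x : ℝ) :
    orbitCrossRatio R (R^[k] x) ≤ B ^ k * orbitCrossRatio R x := by
  induction k with
  | zero => simp
  | succ k ih =>
    rw [Function.iterate_succ_apply', pow_succ', mul_assoc]
    exact (hB _).trans (mul_le_mul_of_nonneg_left ih hB₀)

lemma displacement_le_of_mem_uIcc (hmono : Monotone R) (hx : x ∈ uIcc y (R y)) :
    displacement R x ≤ displacement R y + displacement R (R y) := by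
  have hRx := abs_sub_left_of_mem_uIcc (hmono.mapsTo_uIcc hx)
  have hxy := abs_sub_right_of_mem_uIcc hx
  have htriangle := abs_sub_le (R x) (R y) x
  simp only [displacement]
  linarith

variable (hdir : (∀ x, x < R x) ∨ ∀ x, R x < x) (hsurj : Function.Surjective R)
  (hB : ∀ x, orbitCrossRatio R (R x) ≤ B * orbitCrossRatio R x)

section

include hdir

lemma quarter_le_orbitCrossRatio (hmin : ∀ y, displacement R (R x) ≤ displacement R y) :
    1 / 4 ≤ orbitCrossRatio R x := by
  have hne (y : ℝ) : y ≠ R (R y) := by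
    rcases hdir with h | h
    · exact ((h y).trans (h _)).ne
    · exact ((h _).trans (h y)).ne'
  exact quarter_le_crossRatio (hne _) (hne _) (hmin x) (hmin _)

lemma orbitCrossRatio_mul_displacement_le (x : ℝ) :
    orbitCrossRatio R x * displacement R (R x) ≤ displacement R (R (R x)) := by
  have hmem (y : ℝ) : R y ∈ uIcc y (R (R y)) := by
    rcases hdir with h | h
    · exact Icc_subset_uIcc ⟨(h y).le, (h _).le⟩
    · exact Icc_subset_uIcc' ⟨(h _).le, (h y).le⟩
  exact crossRatio_mul_abs_sub_le (hmem _) (hmem _)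

end

include hdir hsurj hB

/-- Around the smallest gap the cross-ratio is at least `1 / 4`; the cross-ratio inequality carries
a lower bound back along the orbit, where it compares two consecutive gaps. -/
lemma displacement_le_mul_displacement_map (hB₀ : 0 < B)
    (hmin : ∀ x, displacement R (R^[k] y) ≤ displacement R x) :
    displacement R y ≤ 4 * B ^ k * displacement R (R y) := by
  obtain ⟨x, rfl⟩ := hsurj y
  have hquarter : 1 / 4 ≤ B ^ k * orbitCrossRatio R x := by
    rw [← Function.iterate_succ_apply, Function.iterate_succ_apply'] at hmin
    exact (quarter_le_orbitCrossRatio hdir hmin).trans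
      (orbitCrossRatio_iterate_le hB₀.le hB k x)
  calc displacement R (R x) = 4 * (1 / 4) * displacement R (R x) := by ring
    _ ≤ 4 * (B ^ k * orbitCrossRatio R x) * displacement R (R x) := by
      gcongr
      exact abs_nonneg _
    _ = 4 * B ^ k * (orbitCrossRatio R x * displacement R (R x)) := by ring
    _ ≤ 4 * B ^ k * displacement R (R (R x)) := by
      gcongr
      exact orbitCrossRatio_mul_displacement_le hdir x

lemma displacement_le_pow_mul_displacement_iterate (hB₁ : 1 ≤ B) (hk : k ≤ n)
    (hmin : ∀ x, displacement R (R^[k] y) ≤ displacement R x) :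
    displacement R y ≤ (4 * B ^ n) ^ k * displacement R (R^[k] y) := by
  induction k generalizing y with
  | zero => simp
  | succ k ih =>
    have hB₀ : 0 < B := one_pos.trans_le hB₁
    calc displacement R y ≤ 4 * B ^ (k + 1) * displacement R (R y) :=
          displacement_le_mul_displacement_map hdir hsurj hB hB₀ hmin
      _ ≤ 4 * B ^ n * displacement R (R y) := by
        gcongr
        exact abs_nonneg _
      _ ≤ 4 * B ^ n * ((4 * B ^ n) ^ k * displacement R (R^[k] (R y))) := by
        gcongr
        exact ih (by omega) hmin
      _ = (4 * B ^ n) ^ (k + 1) * displacement R (R^[k + 1] y) := by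
        rw [Function.iterate_succ_apply]
        ring

theorem displacement_iterate_le_of_mem_uIcc (hmono : Monotone R) (hB₁ : 1 ≤ B)
    (hmin : ∀ x, displacement R (R^[n] y) ≤ displacement R x) (hx : x ∈ uIcc y (R y))
    (hk : k < n) :
    displacement R (R^[k] x) ≤ 2 * (4 * B ^ n) ^ n * displacement R (R^[n] y) := by
  have hbase : 1 ≤ 4 * B ^ n := by linarith [one_le_pow₀ hB₁ (n := n)]
  have horbit {j : ℕ} (hj : j ≤ n) :
      displacement R (R^[j] y) ≤ (4 * B ^ n) ^ n * displacement R (R^[n] y) := by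
    have hiter : R^[n - j] (R^[j] y) = R^[n] y := by
      rw [← Function.iterate_add_apply, Nat.sub_add_cancel hj]
    rw [← hiter] at hmin ⊢
    refine (displacement_le_pow_mul_displacement_iterate hdir hsurj hB hB₁ (Nat.sub_le n j)
      hmin).trans ?_
    gcongr
    exacts [abs_nonneg _, Nat.sub_le n j]
  have hxk : R^[k] x ∈ uIcc (R^[k] y) (R (R^[k] y)) := by
    rw [← Function.iterate_succ_apply' R, Function.iterate_succ_apply]
    exact (hmono.iterate k).mapsTo_uIcc hx
  calc displacement R (R^[k] x) ≤ displacement R (R^[k] y) + displacement R (R (R^[k] y)) :=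
        displacement_le_of_mem_uIcc hmono hxk
    _ ≤ 2 * (4 * B ^ n) ^ n * displacement R (R^[n] y) := by
      have hsucc := horbit hk
      rw [Function.iterate_succ_apply'] at hsucc
      linarith [horbit hk.le]

end Displacement

section Periodic

variable {g : ℝ → ℝ} {T : ℝ}

lemma exists_forall_le_of_periodic (hg : Continuous g) (hper : Function.Periodic g T) (hT : T ≠ 0) :
    ∃ L, ∀ x, g x ≤ L := by
  obtain ⟨L, hL⟩ := (hper.compact_of_continuous hT hg).bddAbove
  exact ⟨L, fun x => hL (mem_range_self x)⟩

lemma exists_pos_forall_le_of_periodic (hg : Continuous g) (hper : Function.Periodic g T)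
    (hT : T ≠ 0) (hpos : ∀ x, 0 < g x) : ∃ η > 0, ∀ x, η ≤ g x := by
  obtain ⟨η, hη, hle⟩ := (hper.compact_of_continuous hT hg).exists_forall_le' continuousOn_id
    (a := 0) (forall_mem_range.2 hpos)
  exact ⟨η, hη, fun x => hle _ (mem_range_self x)⟩

lemma periodic_deriv_of_add_eq_add {s : ℝ} (h : ∀ x, g (x + T) = g x + s) :
    Function.Periodic (deriv g) T := by
  intro x
  rw [← deriv_comp_add_const, funext h, deriv_add_const]

end Periodic

namespace MCM

variable (f : MCM)

/-- The lift of a multicritical circle map as a degree one lift, which gives access to the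
translation number. -/
def toCircleDeg1Lift : CircleDeg1Lift := ⟨⟨f.F, f.mono.monotone⟩, f.deg1⟩

lemma translationNumber_toCircleDeg1Lift {ρ : ℝ} (hrot : HasRotationNumber f.F ρ) :
    f.toCircleDeg1Lift.translationNumber = ρ :=
  f.toCircleDeg1Lift.translationNumber_eq_of_tendsto₀ hrot

lemma surjective : Function.Surjective f.F :=
  f.smooth.continuous.surjective f.toCircleDeg1Lift.tendsto_atTop f.toCircleDeg1Lift.tendsto_atBot

lemma differentiable : Differentiable ℝ f.F := f.smooth.differentiable three_ne_zero

lemma differentiable_deriv : Differentiable ℝ (deriv f.F) :=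
  ContDiff.differentiable (n := 2) f.smooth.deriv' two_ne_zero

lemma continuous_deriv_deriv : Continuous (deriv (deriv f.F)) :=
  ContDiff.continuous (n := 1) (ContDiff.deriv' (n := 1) f.smooth.deriv')

lemma F_sub_int (x : ℝ) (k : ℤ) : f.F (x - k) = f.F x - k :=
  f.toCircleDeg1Lift.map_sub_int x k

lemma deriv_nonneg (x : ℝ) : 0 ≤ deriv f.F x := f.mono.monotone.deriv_nonneg

lemma slope_nonneg (a b : ℝ) : 0 ≤ slope f.F a b :=
  (f.mono.monotone.monotoneOn univ).slope_nonneg trivial trivial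

lemma periodic_deriv : Function.Periodic (deriv f.F) 1 :=
  periodic_deriv_of_add_eq_add f.deg1

lemma periodic_deriv_deriv : Function.Periodic (deriv (deriv f.F)) 1 :=
  periodic_deriv_of_add_eq_add (s := 0) (by simpa using f.periodic_deriv)

lemma deriv_sub_int (x : ℝ) (k : ℤ) : deriv f.F (x - k) = deriv f.F x := by
  simpa using f.periodic_deriv.sub_int_mul_eq k

lemma exists_deriv_le : ∃ L, ∀ x, deriv f.F x ≤ L :=
  exists_forall_le_of_periodic f.differentiable_deriv.continuous f.periodic_deriv one_ne_zero

lemma exists_abs_deriv_deriv_le : ∃ L, ∀ x, |deriv (deriv f.F) x| ≤ L :=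
  exists_forall_le_of_periodic f.continuous_deriv_deriv.abs
    (f.periodic_deriv_deriv.comp abs) one_ne_zero

lemma exists_pos_le_sub {r : ℝ} (hr : 0 < r) : ∃ η > 0, ∀ x, η ≤ f.F (x + r) - f.F x := by
  have hcont := f.smooth.continuous
  refine exists_pos_forall_le_of_periodic (by fun_prop) (T := 1) (fun x => ?_) one_ne_zero
    fun x => sub_pos.2 (f.mono (lt_add_of_pos_right x hr))
  rw [add_right_comm, f.deg1, f.deg1, add_sub_add_right_eq_sub]

lemma exists_lt_deriv_or_mem_W :
    ∃ η > 0, ∀ x ∈ Icc (0 : ℝ) 1, η < deriv f.F x ∨ ∃ (i : Fin f.N) (k : ℤ), x - k ∈ f.W i := by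
  have hopen : IsOpen {x : ℝ | ∃ (i : Fin f.N) (k : ℤ), x - k ∈ f.W i} := by
    simp only [ofPred_exists]
    exact isOpen_iUnion fun i => isOpen_iUnion fun k =>
      (f.W_open i).preimage (continuous_id.sub continuous_const)
  obtain ⟨η, hη, hle⟩ := (isCompact_Icc.diff hopen).exists_forall_le' (a := 0)
    f.differentiable_deriv.continuous.continuousOn (fun x hx => by
      refine (f.deriv_nonneg x).lt_of_ne fun h => hx.2 ?_
      obtain ⟨i, k, rfl⟩ := f.critOnly x h.symm
      exact ⟨i, k, by simpa using f.c_mem_W i⟩)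
  refine ⟨η / 2, half_pos hη, fun x hx => ?_⟩
  by_cases hW : ∃ (i : Fin f.N) (k : ℤ), x - k ∈ f.W i
  · exact Or.inr hW
  · exact Or.inl ((half_lt_self hη).trans_le (hle x ⟨hx, hW⟩))

/-- Lebesgue number lemma for the cover of the circle by the critical neighborhoods and the set
where the derivative is large. -/
lemma exists_le_deriv_or_subset_W :
    ∃ η > 0, ∃ r > 0, ∀ a b, b - a < r → (∀ x ∈ Icc a b, η ≤ deriv f.F x) ∨
      ∃ (i : Fin f.N) (k : ℤ), Icc (a - k) (b - k) ⊆ f.W i := by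
  obtain ⟨η, hη, hcover⟩ := f.exists_lt_deriv_or_mem_W
  let U : Option (Fin f.N × ℤ) → Set ℝ
    | none => {x | η < deriv f.F x}
    | some (i, k) => {x | x - k ∈ f.W i}
  have hU (j) : IsOpen (U j) := by
    rcases j with _ | ⟨i, k⟩
    · exact isOpen_lt continuous_const f.differentiable_deriv.continuous
    · exact (f.W_open i).preimage (continuous_id.sub continuous_const)
  have hsub : Icc (0 : ℝ) 1 ⊆ ⋃ j, U j := fun x hx => mem_iUnion.2 <| by
    rcases hcover x hx with h | ⟨i, k, h⟩
    exacts [⟨none, h⟩, ⟨some (i, k), h⟩]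
  obtain ⟨r, hr, hball⟩ := lebesgue_number_lemma_of_metric isCompact_Icc hU hsub
  refine ⟨η, hη, r, hr, fun a b hab => ?_⟩
  obtain ⟨j, hj⟩ := hball (Int.fract a) ⟨Int.fract_nonneg a, (Int.fract_lt_one a).le⟩
  have hmem {x : ℝ} (hx : x ∈ Icc a b) : x - ⌊a⌋ ∈ U j := hj <| by
    rw [Metric.mem_ball, Real.dist_eq, ← Int.self_sub_floor, sub_sub_sub_cancel_right,
      abs_of_nonneg (sub_nonneg.2 hx.1)]
    linarith [hx.2]
  rcases j with _ | ⟨i, k⟩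
  · refine Or.inl fun x hx => ?_
    rw [← f.deriv_sub_int x ⌊a⌋]
    exact (hmem hx).le
  · refine Or.inr ⟨i, ⌊a⌋ + k, fun x hx => ?_⟩
    rw [← add_mem_Icc_iff_left, Int.cast_add] at hx
    have hW : x + (⌊a⌋ + k) - ⌊a⌋ - k ∈ f.W i := hmem hx
    rwa [sub_sub, add_sub_cancel_right] at hW

lemma exists_deriv_le_mul_slope_of_le_sub {r : ℝ} (hr : 0 < r) (l : ℝ) :
    ∃ C, ∀ a b, r ≤ b - a → b - a ≤ l → ∀ x, deriv f.F x ≤ C * slope f.F a b := by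
  obtain ⟨L, hL⟩ := f.exists_deriv_le
  obtain ⟨η, hη, hincr⟩ := f.exists_pos_le_sub hr
  refine ⟨L / η * l, fun a b hrab hlab x => ?_⟩
  have hL₀ : 0 ≤ L := (f.deriv_nonneg x).trans (hL x)
  have hlong : η ≤ f.F b - f.F a := by
    linarith [hincr a, f.mono.monotone (show a + r ≤ b by linarith)]
  calc deriv f.F x ≤ L := hL x
    _ = L / η * η := by field_simp
    _ ≤ L / η * ((b - a) * slope f.F a b) := by
      gcongr
      rwa [← smul_eq_mul, sub_smul_slope, vsub_eq_sub]
    _ ≤ L / η * (l * slope f.F a b) := by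
      gcongr
      exact f.slope_nonneg a b
    _ = L / η * l * slope f.F a b := by ring

lemma exists_deriv_le_mul_slope_of_subset_W :
    ∃ C, ∀ (i : Fin f.N) (k : ℤ) (a b : ℝ), a < b → Icc (a - k) (b - k) ⊆ f.W i →
      ∀ x ∈ Icc a b, deriv f.F x ≤ C * slope f.F a b := by
  obtain ⟨C, hC⟩ := (finite_range fun i => 4 * (f.be i / f.al i) * 2 ^ (f.s i - 1)).bddAbove
  refine ⟨C, fun i k a b hab hW x hx => ?_⟩
  have hal := f.al_pos i
  have hpower := deriv_le_mul_slope_of_powerLaw f.differentiable f.mono.monotone hal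
    (hal.trans (f.al_lt_be i)).le (f.s_gt_one i).le (f.isCrit i) (sub_lt_sub_right hab k)
    (fun y hy hne => (f.powerLaw i y (hW hy) hne).1.le)
    (fun y hy hne => (f.powerLaw i y (hW hy) hne).2.le)
    (x := x - k) ⟨sub_le_sub_right hx.1 _, sub_le_sub_right hx.2 _⟩
  rw [f.deriv_sub_int, slope_def_field, f.F_sub_int, f.F_sub_int, sub_sub_sub_cancel_right,
    sub_sub_sub_cancel_right, ← slope_def_field] at hpower
  exact hpower.trans
    (mul_le_mul_of_nonneg_right (hC (mem_range_self i)) (f.slope_nonneg a b))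

theorem exists_deriv_le_mul_slope (l : ℝ) :
    ∃ C, ∀ a b, a < b → b - a ≤ l → ∀ x ∈ Icc a b, deriv f.F x ≤ C * slope f.F a b := by
  obtain ⟨η, hη, r, hr, hloc⟩ := f.exists_le_deriv_or_subset_W
  obtain ⟨L, hL⟩ := f.exists_deriv_le
  obtain ⟨C₁, hC₁⟩ := f.exists_deriv_le_mul_slope_of_le_sub hr l
  obtain ⟨C₂, hC₂⟩ := f.exists_deriv_le_mul_slope_of_subset_W
  refine ⟨max (L / η) (max C₁ C₂), fun a b hab hl x hx => ?_⟩
  have hle_max {C : ℝ} (h : deriv f.F x ≤ C * slope f.F a b) (hC : C ≤ max (L / η) (max C₁ C₂)) :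
      deriv f.F x ≤ max (L / η) (max C₁ C₂) * slope f.F a b :=
    h.trans (mul_le_mul_of_nonneg_right hC (f.slope_nonneg a b))
  rcases le_or_gt r (b - a) with hlong | hshort
  · exact hle_max (hC₁ a b hlong hl x) (by simp)
  rcases hloc a b hshort with hpos | ⟨i, k, hW⟩
  · refine hle_max (deriv_le_mul_slope f.differentiable hab fun y hy => ?_) (le_max_left _ _)
    calc deriv f.F x ≤ L := hL x
      _ = L / η * η := by field_simp
      _ ≤ L / η * deriv f.F y := by
        gcongr
        exacts [div_nonneg ((f.deriv_nonneg x).trans (hL x)) hη.le, hpos y hy]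
  · exact hle_max (hC₂ i k a b hab hW x hx) (by simp)

lemma exists_crossRatio_map_le (l : ℝ) :
    ∃ C ≥ 1, ∀ a b c d, a < b → b < c → c < d → d - a ≤ l →
      crossRatio (f.F a) (f.F b) (f.F c) (f.F d) ≤ C * crossRatio a b c d := by
  obtain ⟨C, hC⟩ := f.exists_deriv_le_mul_slope l
  refine ⟨max 1 (C ^ 2), le_max_left _ _, fun a b c d hab hbc hcd hl => ?_⟩
  refine (crossRatio_map_le_of_deriv_le_mul_slope (f.mono.strictMonoOn _) f.differentiable hab hbc
    hcd fun u hu v hv huv => hC u v huv ?_).trans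
    (mul_le_mul_of_nonneg_right (le_max_right _ _) (crossRatio_nonneg _ _ _ _))
  linarith [hu.1, hv.2]

open scoped Classical in
/-- The critical points of the circle map with a representative in `[u, v]`. -/
def critIndices (u v : ℝ) : Finset (Fin f.N) := {i | ∃ k : ℤ, f.c i + k ∈ Icc u v}

variable {f} in
lemma mem_critIndices {u v : ℝ} {i : Fin f.N} :
    i ∈ f.critIndices u v ↔ ∃ k : ℤ, f.c i + k ∈ Icc u v := by
  simp [critIndices]

lemma critIndices_subset_union (u v w : ℝ) :
    f.critIndices u w ⊆ f.critIndices u v ∪ f.critIndices v w := by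
  intro i hi
  obtain ⟨k, hu, hw⟩ := mem_critIndices.1 hi
  rw [Finset.mem_union, mem_critIndices, mem_critIndices]
  exact (le_total (f.c i + k) v).imp (fun hv => ⟨k, hu, hv⟩) fun hv => ⟨k, hv, hw⟩

lemma crossRatio_map_le_of_subset_W {a b c d : ℝ} {i : Fin f.N} {k : ℤ} (hab : a < b) (hbc : b < c)
    (hcd : c < d) (hW : Icc (a - k) (d - k) ⊆ f.W i) (hcrit : f.critIndices a d = ∅) :
    crossRatio (f.F a) (f.F b) (f.F c) (f.F d) ≤ crossRatio a b c d := by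
  have hne (x : ℝ) (hx : x ∈ Icc (a - k) (d - k)) : x ≠ f.c i := by
    rintro rfl
    rw [← add_mem_Icc_iff_left] at hx
    exact Finset.notMem_empty i (hcrit ▸ mem_critIndices.2 ⟨k, hx⟩)
  have hpos (x : ℝ) (hx : x ∈ Icc (a - k) (d - k)) : 0 < deriv f.F x :=
    (mul_nonneg (f.al_pos i).le (by positivity)).trans_lt (f.powerLaw i x (hW hx) (hne x hx)).1
  have hle := crossRatio_map_le_of_schwarzianDeriv_nonpos f.smooth hpos
    (fun x hx => (f.negSchwarzian i x (hW hx) (hne x hx)).le) (sub_lt_sub_right hab k)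
    (sub_lt_sub_right hbc k) (sub_lt_sub_right hcd k)
  simpa only [f.F_sub_int, crossRatio_sub_right] using hle

lemma exists_crossRatio_map_le_exp_of_critIndices_eq_empty :
    ∃ K ≥ 0, ∃ r > 0, ∀ a b c d, a < b → b < c → c < d → d - a < r → f.critIndices a d = ∅ →
      crossRatio (f.F a) (f.F b) (f.F c) (f.F d) ≤ Real.exp (K * (d - a)) * crossRatio a b c d := by
  obtain ⟨η, hη, r, hr, hloc⟩ := f.exists_le_deriv_or_subset_W
  obtain ⟨L, hL⟩ := f.exists_abs_deriv_deriv_le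
  have hL₀ : 0 ≤ L := (abs_nonneg _).trans (hL 0)
  refine ⟨2 * (L / η), by positivity, r, hr, fun a b c d hab hbc hcd hshort hcrit => ?_⟩
  rcases hloc a d hshort with hpos | ⟨i, k, hW⟩
  · exact crossRatio_map_le_of_le_deriv (f.mono.strictMonoOn _) f.differentiable
      f.differentiable_deriv hη (fun x _ => hL x) hpos hab hbc hcd
  · refine (f.crossRatio_map_le_of_subset_W hab hbc hcd hW hcrit).trans
      (le_mul_of_one_le_left (crossRatio_nonneg _ _ _ _) (Real.one_le_exp ?_))
    exact mul_nonneg (by positivity) (by linarith)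

/-- An upper bound for the logarithm of the factor by which one application of the map increases
cross-ratios in `[u, v]`, chosen additive enough to be summed along disjoint intervals. -/
def distortionCost (K D u v : ℝ) : ℝ := K * (v - u) + D * (f.critIndices u v).card

lemma distortionCost_le_add {K D : ℝ} (hD : 0 ≤ D) (u v w : ℝ) :
    f.distortionCost K D u w ≤ f.distortionCost K D u v + f.distortionCost K D v w := by
  have hcard : ((f.critIndices u w).card : ℝ) ≤
      (f.critIndices u v).card + (f.critIndices v w).card :=
    mod_cast (Finset.card_le_card (f.critIndices_subset_union u v w)).trans
      (Finset.card_union_le _ _)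
  simp only [distortionCost]
  linarith [mul_le_mul_of_nonneg_left hcard hD]

theorem exists_crossRatio_map_le_exp_distortionCost (l : ℝ) :
    ∃ K ≥ 0, ∃ D ≥ 0, ∀ a b c d, a < b → b < c → c < d → d - a ≤ l →
      crossRatio (f.F a) (f.F b) (f.F c) (f.F d) ≤
        Real.exp (f.distortionCost K D a d) * crossRatio a b c d := by
  obtain ⟨C, hC₁, hC⟩ := f.exists_crossRatio_map_le l
  obtain ⟨K, hK, r, hr, hfree⟩ := f.exists_crossRatio_map_le_exp_of_critIndices_eq_empty
  have hlog : 0 ≤ Real.log C := Real.log_nonneg hC₁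
  refine ⟨K + Real.log C / r, by positivity, Real.log C, hlog, fun a b c d hab hbc hcd hl => ?_⟩
  have had : 0 ≤ d - a := by linarith
  have hle_cost {t : ℝ} (ht : t ≤ f.distortionCost (K + Real.log C / r) (Real.log C) a d)
      (h : crossRatio (f.F a) (f.F b) (f.F c) (f.F d) ≤ Real.exp t * crossRatio a b c d) :
      crossRatio (f.F a) (f.F b) (f.F c) (f.F d) ≤
        Real.exp (f.distortionCost (K + Real.log C / r) (Real.log C) a d) * crossRatio a b c d :=
    h.trans (mul_le_mul_of_nonneg_right (Real.exp_le_exp.2 ht) (crossRatio_nonneg _ _ _ _))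
  have hany := hC a b c d hab hbc hcd hl
  rw [← Real.exp_log (one_pos.trans_le hC₁)] at hany
  rcases le_or_gt r (d - a) with hlong | hshort
  · refine hle_cost ?_ hany
    calc Real.log C ≤ Real.log C * ((d - a) / r) :=
          le_mul_of_one_le_right hlog ((one_le_div hr).2 hlong)
      _ = Real.log C / r * (d - a) := by ring
      _ ≤ f.distortionCost (K + Real.log C / r) (Real.log C) a d := by
        rw [distortionCost, add_mul, add_right_comm]
        exact le_add_of_nonneg_left (by positivity)
  rcases (f.critIndices a d).eq_empty_or_nonempty with hcrit | hcrit
  · refine hle_cost ?_ (hfree a b c d hab hbc hcd hshort hcrit)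
    rw [distortionCost, add_mul, add_assoc]
    exact le_add_of_nonneg_right (by positivity)
  · refine hle_cost ?_ hany
    have hcard : (1 : ℝ) ≤ (f.critIndices a d).card := mod_cast hcrit.card_pos
    exact (le_mul_of_one_le_right hlog hcard).trans (le_add_of_nonneg_left (by positivity))

lemma crossRatio_iterate_le {K D l : ℝ} (hstep : ∀ a b c d, a < b → b < c → c < d → d - a ≤ l →
      crossRatio (f.F a) (f.F b) (f.F c) (f.F d) ≤
        Real.exp (f.distortionCost K D a d) * crossRatio a b c d)
    {a b c d : ℝ} (hab : a < b) (hbc : b < c) (hcd : c < d) {m : ℕ}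
    (hlen : ∀ i < m, f.F^[i] d - f.F^[i] a ≤ l) :
    crossRatio (f.F^[m] a) (f.F^[m] b) (f.F^[m] c) (f.F^[m] d) ≤
      Real.exp (∑ i ∈ Finset.range m, f.distortionCost K D (f.F^[i] a) (f.F^[i] d)) *
        crossRatio a b c d := by
  induction m with
  | zero => simp
  | succ m ih =>
    have hmono := f.mono.iterate m
    simp only [Function.iterate_succ_apply']
    rw [Finset.sum_range_succ, add_comm, Real.exp_add, mul_assoc]
    exact (hstep _ _ _ _ (hmono hab) (hmono hbc) (hmono hcd) (hlen m (by omega))).trans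
      (mul_le_mul_of_nonneg_left (ih fun i hi => hlen i (by omega)) (Real.exp_nonneg _))

section ClosestReturn

variable {f} {q : ℕ} {p : ℤ} (hq : IsClosestReturn f.toCircleDeg1Lift.translationNumber q p)
include hq

lemma sum_card_critIndices_le {x y : ℝ} (h : IsReturnInterval f.F q p x y) :
    ∑ i ∈ Finset.range q, (f.critIndices (f.F^[i] x) (f.F^[i] y)).card ≤ f.N := by
  have hdisj : (Finset.range q : Set ℕ).PairwiseDisjoint
      fun i => f.critIndices (f.F^[i] x) (f.F^[i] y) := by
    refine fun i hi j hj hne => Finset.disjoint_left.2 fun t hti htj => hne ?_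
    obtain ⟨k, hk⟩ := mem_critIndices.1 hti
    obtain ⟨l, hl⟩ := mem_critIndices.1 htj
    refine (eq_of_iterate_returnInterval_inter hq h (Finset.mem_range.1 hi) (Finset.mem_range.1 hj)
      (k := k - l) ?_ ?_).1 <;> simp only [toCircleDeg1Lift, Int.cast_sub]
    · exact (by linarith [hk.1, hl.2] : f.F^[i] x ≤ f.F^[j] y + (k - l))
    · exact (by linarith [hk.2, hl.1] : f.F^[j] x + (k - l) ≤ f.F^[i] y)
  rw [← Finset.card_biUnion hdisj]
  exact (Finset.card_le_univ _).trans_eq (Fintype.card_fin _)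

lemma sum_distortionCost_le {K D : ℝ} (hK : 0 ≤ K) (hD : 0 ≤ D) {x y : ℝ}
    (h : IsReturnInterval f.F q p x y) :
    ∑ i ∈ Finset.range q, f.distortionCost K D (f.F^[i] x) (f.F^[i] y) ≤ K * 2 + D * f.N := by
  simp only [distortionCost, Finset.sum_add_distrib, ← Finset.mul_sum]
  gcongr
  · exact sum_length_iterate_returnInterval_le hq h
  · exact_mod_cast sum_card_critIndices_le hq h

end ClosestReturn

lemma exists_crossRatio_iterate_le_of_isReturnInterval :
    ∃ B ≥ 1, ∀ (q : ℕ) (p : ℤ), IsClosestReturn f.toCircleDeg1Lift.translationNumber q p →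
      ∀ a b c d, IsReturnInterval f.F q p a b → IsReturnInterval f.F q p b c →
        IsReturnInterval f.F q p c d →
        crossRatio (f.F^[q] a) (f.F^[q] b) (f.F^[q] c) (f.F^[q] d) ≤ B * crossRatio a b c d := by
  obtain ⟨K, hK, D, hD, hstep⟩ := f.exists_crossRatio_map_le_exp_distortionCost 3
  refine ⟨Real.exp (3 * (K * 2 + D * f.N)), Real.one_le_exp (by positivity),
    fun q p hq a b c d hab hbc hcd => ?_⟩
  have hlen (i : ℕ) (hi : i < q) : f.F^[i] d - f.F^[i] a ≤ 3 := by
    have hlt {x y : ℝ} (h : IsReturnInterval f.F q p x y) : f.F^[i] y < f.F^[i] x + 1 :=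
      iterate_returnInterval_lt_add_one hq h hi
    linarith [hlt hab, hlt hbc, hlt hcd]
  refine (f.crossRatio_iterate_le hstep hab.1 hbc.1 hcd.1 hlen).trans ?_
  refine mul_le_mul_of_nonneg_right (Real.exp_le_exp.2 ?_) (crossRatio_nonneg _ _ _ _)
  have hsplit (x y z w : ℝ) : f.distortionCost K D x w ≤
      f.distortionCost K D x y + f.distortionCost K D y z + f.distortionCost K D z w := by
    linarith [f.distortionCost_le_add (K := K) hD x z w, f.distortionCost_le_add (K := K) hD x y z]
  refine (Finset.sum_le_sum fun i _ => hsplit _ (f.F^[i] b) (f.F^[i] c) _).trans ?_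
  rw [Finset.sum_add_distrib, Finset.sum_add_distrib]
  linarith [sum_distortionCost_le hq hK hD hab, sum_distortionCost_le hq hK hD hbc,
    sum_distortionCost_le hq hK hD hcd]

theorem exists_orbitCrossRatio_returnMap_le :
    ∃ B ≥ 1, ∀ (q : ℕ) (p : ℤ), IsClosestReturn f.toCircleDeg1Lift.translationNumber q p →
      ∀ x, orbitCrossRatio (returnMap f.F q p) (returnMap f.F q p x) ≤
        B * orbitCrossRatio (returnMap f.F q p) x := by
  obtain ⟨B, hB₁, hB⟩ := f.exists_crossRatio_iterate_le_of_isReturnInterval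
  refine ⟨B, hB₁, fun q p hq x => ?_⟩
  set R := returnMap f.F q p
  have hiter (a b c d : ℝ) : crossRatio (R a) (R b) (R c) (R d) =
      crossRatio (f.F^[q] a) (f.F^[q] b) (f.F^[q] c) (f.F^[q] d) := crossRatio_sub_right _ _ _ _ _
  rw [orbitCrossRatio, orbitCrossRatio, hiter]
  rcases lt_returnMap_or_returnMap_lt f.toCircleDeg1Lift hq.ne_zero with h | h
  · exact hB q p hq _ _ _ _ ⟨h _, .inl rfl⟩ ⟨h _, .inl rfl⟩ ⟨h _, .inl rfl⟩
  · rw [← crossRatio_reverse, ← crossRatio_reverse x]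
    exact hB q p hq _ _ _ _ ⟨h _, .inr rfl⟩ ⟨h _, .inr rfl⟩ ⟨h _, .inr rfl⟩

lemma monotone_returnMap (q : ℕ) (p : ℤ) : Monotone (returnMap f.F q p) :=
  fun _ _ hxy => sub_le_sub_right (f.mono.monotone.iterate q hxy) _

lemma surjective_returnMap (q : ℕ) (p : ℤ) : Function.Surjective (returnMap f.F q p) := by
  intro y
  obtain ⟨x, hx⟩ := f.surjective.iterate q (y + p)
  exact ⟨x, by rw [returnMap, hx, add_sub_cancel_right]⟩

lemma displacement_returnMap_pos {q : ℕ} {p : ℤ}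
    (hq : IsClosestReturn f.toCircleDeg1Lift.translationNumber q p) (x : ℝ) :
    0 < displacement (returnMap f.F q p) x := by
  rcases lt_returnMap_or_returnMap_lt f.toCircleDeg1Lift hq.ne_zero with h | h
  · exact abs_pos.2 (sub_ne_zero.2 (h x).ne')
  · exact abs_pos.2 (sub_ne_zero.2 (h x).ne)

theorem exists_displacement_div_displacement_le (k : ℕ) :
    ∃ C > 1, ∀ (q : ℕ) (p : ℤ) (R : ℝ → ℝ), R = returnMap f.F q p →
      IsClosestReturn f.toCircleDeg1Lift.translationNumber q p →
      ∀ x y, (∀ t, displacement R (R^[k] y) ≤ displacement R t) → x ∈ uIcc y (R y) →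
        ∀ j < k, ∀ t, displacement R (R^[j] x) / displacement R t ≤ C := by
  obtain ⟨B, hB₁, hB⟩ := f.exists_orbitCrossRatio_returnMap_le
  have hbase : 1 ≤ 4 * B ^ k := by linarith [one_le_pow₀ hB₁ (n := k)]
  have hC₁ : 1 < 2 * (4 * B ^ k) ^ k := by linarith [one_le_pow₀ hbase (n := k)]
  refine ⟨2 * (4 * B ^ k) ^ k, hC₁, ?_⟩
  rintro q p _ rfl hq x y hmin hx j hj t
  rw [div_le_iff₀ (f.displacement_returnMap_pos hq t)]
  refine (displacement_iterate_le_of_mem_uIcc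
    (lt_returnMap_or_returnMap_lt f.toCircleDeg1Lift hq.ne_zero) (f.surjective_returnMap q p)
    (hB q p hq) (f.monotone_returnMap q p) hB₁ hmin hx hj).trans ?_
  exact mul_le_mul_of_nonneg_left (hmin t) (one_pos.trans hC₁).le

end MCM

lemma eq_iterate_of_forall_lt {α : Type*} {R : α → α} {u : ℕ → α} {a k : ℕ}
    (h : ∀ j < k, u (j + a + 1) = R (u (j + a))) : u (k + a) = R^[k] (u a) := by
  induction k with
  | zero => rw [zero_add, Function.iterate_zero_apply]
  | succ k ih =>
    rw [add_right_comm, h k k.lt_succ_self, ih fun j hj => h j (hj.trans k.lt_succ_self),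
      Function.iterate_succ_apply']

/-- There is `C₂ > 1` depending only on `f` with the following property.
Let `z₁, …, z₅` be the points of the seven-point lemma, i.e. `z_{j+1} = f^{q_n}(z_j)` and
`z₄` has the smallest displacement under `f^{q_n}` among all points of the circle. If
`w₀, …, w₄` satisfy `w_{j+1} = f^{q_n}(w_j)` and `w₁` lies in the interval with endpoints
`z₁` and `z₂` not containing `z₃`, then `|w₁ - w₂|/|w₀ - w₁| ≤ C₂` and
`C₂⁻¹ ≤ |w_{i-1} - w_i|/|w_i - w_{i+1}| ≤ C₂` for `i = 2, 3`. -/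
theorem seven_point_transfer_lemma
    (f : MCM) (ρ : ℝ) (hirr : Irrational ρ) (hmem : ρ ∈ Set.Ioo (0 : ℝ) 1)
    (hrot : HasRotationNumber f.F ρ) :
    ∃ C₂ : ℝ, 1 < C₂ ∧ ∀ (n : ℕ) (z w : ℕ → ℝ),
      (∀ j : ℕ, 1 ≤ j → j ≤ 4 → z (j + 1) = f.F^[qDen ρ n] (z j) - (pNum ρ n : ℝ)) →
      (∀ x : ℝ, |f.F^[qDen ρ n] (z 4) - (pNum ρ n : ℝ) - z 4| ≤
        |f.F^[qDen ρ n] x - (pNum ρ n : ℝ) - x|) →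
      (∀ j : ℕ, j ≤ 3 → w (j + 1) = f.F^[qDen ρ n] (w j) - (pNum ρ n : ℝ)) →
      w 1 ∈ Set.uIcc (z 1) (z 2) →
      (|w 1 - w 2| / |w 0 - w 1| ≤ C₂ ∧
        ∀ i : ℕ, 2 ≤ i → i ≤ 3 →
          C₂⁻¹ ≤ |w (i - 1) - w i| / |w i - w (i + 1)| ∧
            |w (i - 1) - w i| / |w i - w (i + 1)| ≤ C₂) := by
  obtain rfl : f.toCircleDeg1Lift.translationNumber = ρ := f.translationNumber_toCircleDeg1Lift hrot
  set ρ := f.toCircleDeg1Lift.translationNumber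
  obtain ⟨C, hC₁, hC⟩ := f.exists_displacement_div_displacement_le 3
  refine ⟨C, hC₁, fun n z w hz hmin hw hw₁ => ?_⟩
  obtain ⟨R, hR⟩ : ∃ R, R = returnMap f.F (qDen ρ n) (pNum ρ n) := ⟨_, rfl⟩
  have hreturn (x : ℝ) : f.F^[qDen ρ n] x - (pNum ρ n : ℝ) = R x := by simp [hR, returnMap]
  simp only [hreturn] at hz hmin hw
  have hq := isClosestReturn_qDen_pNum hirr hmem n
  have hz₄ : z 4 = R^[3] (z 1) :=
    eq_iterate_of_forall_lt (a := 1) fun j _ => hz (j + 1) (by omega) (by omega)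
  have hgap (j : ℕ) (hj : j ≤ 3) : |w j - w (j + 1)| = displacement R (w j) := by
    rw [hw j hj, abs_sub_comm, displacement]
  have hpos (j : ℕ) (hj : j ≤ 3) : 0 < |w j - w (j + 1)| := by
    simpa only [hgap j hj, hR] using f.displacement_returnMap_pos hq (w j)
  have hratio (i j : ℕ) (hi : i < 3) (hj : j ≤ 3) :
      |w (i + 1) - w (i + 2)| / |w j - w (j + 1)| ≤ C := by
    have hwi := eq_iterate_of_forall_lt (a := 1) (k := i) fun j _ => hw (j + 1) (by omega)
    rw [hgap (i + 1) (by omega), hgap j hj, hwi]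
    exact hC _ _ R hR hq _ _ (hz₄ ▸ hmin) (hz 1 le_rfl (by simp) ▸ hw₁) i hi _
  refine ⟨hratio 0 0 (by simp) (by simp), fun i hi hi' => ?_⟩
  obtain ⟨i, rfl⟩ := Nat.exists_eq_add_of_le' hi
  refine ⟨inv_le_of_inv_le₀ (div_pos (hpos (i + 1) (by omega)) (hpos _ hi')) ?_,
    hratio i _ (by omega) hi'⟩
  exact (inv_div _ _).trans_le (hratio (i + 1) (i + 1) (by omega) (by omega))
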